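/- arXiv:2207.14417 — 8 statements merged into one kernel-verified Lean document; each statement's English description precedes it below -/
import Mathlib

section
/- Value iteration converges to the value from below: letting L_0 be the value function with L_0(s) = 1 for s ∈ F and L_0(s) = 0 otherwise, the supremum of the iterates equals the least fixpoint of the Bellman operator, i.e., ⨆_{n∈ℕ} B^n(L_0) = lfp(B) = V. -/
/-!
A monotone map `B` that is continuous for a topology in which increasing sequences converge to
their suprema preserves the suprema of chains, so Kleene's argument applies: from any `x` with
`x ≤ B x` and `x ≤ lfp B`, the iterates `Bⁿ x` increase to the least fixpoint. The Bellman operator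
is monotone because transition weights are nonnegative, and continuous because states and actions
are finite in number. Every value of `B` dominates `L₀`; this gives `L₀ ≤ B L₀`, and also
`L₀ ≤ B f ≤ f` for every pre-fixpoint `f`, hence `L₀ ≤ lfp B`.
-/

noncomputable section
open Classical Finset

instance : Fact ((0:ℝ) ≤ 1) := ⟨zero_le_one⟩

/-- A finite simple stochastic game: states are partitioned into Maximizer states
(`isMax`) and Minimizer states, each state has a nonempty finite set of available
actions, the transition function is a probability distribution for every available
action, and `F` is the set of goal states. -/
structure SSG (S A : Type) [Fintype S] [Nonempty S] [Fintype A] where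
  isMax : S → Prop
  Av : S → Finset A
  avNonempty : ∀ s, (Av s).Nonempty
  tr : S → A → S → ℝ
  tr_nonneg : ∀ s a, a ∈ Av s → ∀ s', 0 ≤ tr s a s'
  tr_sum : ∀ s a, a ∈ Av s → ∑ s', tr s a s' = 1
  F : Set S

variable {S A : Type} [Fintype S] [Nonempty S] [Fintype A]

/-- The expected value `Σ_{s'} δ(s,a,s')·f(s')` of `f` after playing `a` in `s`. -/
def SSG.sumR (G : SSG S A) (f : S → unitInterval) (s : S) (a : A) : ℝ :=
  ∑ s', G.tr s a s' * (f s' : ℝ)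

lemma SSG.sumR_mem (G : SSG S A) (f : S → unitInterval) {s : S} {a : A} (ha : a ∈ G.Av s) :
    G.sumR f s a ∈ Set.Icc (0 : ℝ) 1 := by
  constructor
  · exact Finset.sum_nonneg fun s' _ => mul_nonneg (G.tr_nonneg s a ha s') (f s').2.1
  · calc ∑ s', G.tr s a s' * (f s' : ℝ) ≤ ∑ s', G.tr s a s' * 1 := by
          refine Finset.sum_le_sum fun s' _ => ?_
          exact mul_le_mul_of_nonneg_left (f s').2.2 (G.tr_nonneg s a ha s')
    _ = 1 := by simpa using G.tr_sum s a ha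

/-- The Bellman operator: `1` on goal states, the maximum over available actions at
Maximizer states, the minimum over available actions at Minimizer states.
Value functions are maps `S → [0,1]`, ordered pointwise. -/
noncomputable def SSG.bellman (G : SSG S A) (f : S → unitInterval) : S → unitInterval :=
  fun s =>
    if s ∈ G.F then 1
    else if G.isMax s then
      (G.Av s).attach.sup' (Finset.attach_nonempty_iff.mpr (G.avNonempty s))
        (fun a => (⟨G.sumR f s a.1, G.sumR_mem f a.2⟩ : unitInterval))
    else
      (G.Av s).attach.inf' (Finset.attach_nonempty_iff.mpr (G.avNonempty s))
        (fun a => (⟨G.sumR f s a.1, G.sumR_mem f a.2⟩ : unitInterval))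

/-- The Knaster–Tarski least fixpoint of an operator on a complete lattice. -/
def lfpOf {P : Type*} [CompleteLattice P] (Φ : P → P) : P := sInf {x | Φ x ≤ x}

/-- The initial lower bound of value iteration: `1` on goal states, `0` elsewhere. -/
noncomputable def SSG.L0 (G : SSG S A) : S → unitInterval :=
  fun s => if s ∈ G.F then 1 else 0

section Kleene

open Filter Topology OmegaCompletePartialOrder OmegaCompletePartialOrder.fixedPoints

lemma ωScottContinuous_of_monotone_of_continuous {P Q : Type*}
    [OmegaCompletePartialOrder P] [TopologicalSpace P] [SupConvergenceClass P]
    [OmegaCompletePartialOrder Q] [TopologicalSpace Q] [SupConvergenceClass Q] [T2Space Q]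
    {Φ : P → Q} (hmono : Monotone Φ) (hcont : Continuous Φ) : ωScottContinuous Φ := by
  refine ωScottContinuous_iff_monotone_map_ωSup.2 ⟨hmono, fun c => ?_⟩
  have tendsto_map_ωSup : Tendsto (fun n => Φ (c n)) atTop (𝓝 (Φ (ωSup c))) :=
    (hcont.tendsto _).comp (tendsto_atTop_isLUB c.monotone (isLUB_range_ωSup c))
  have tendsto_ωSup_map : Tendsto (fun n => Φ (c n)) atTop (𝓝 (ωSup (c.map ⟨Φ, hmono⟩))) :=
    tendsto_atTop_isLUB (hmono.comp c.monotone) (isLUB_range_ωSup (c.map ⟨Φ, hmono⟩))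
  exact tendsto_nhds_unique tendsto_map_ωSup tendsto_ωSup_map

theorem iSup_iterate_eq_lfpOf {P : Type*} [CompleteLattice P] {Φ : P → P}
    (hΦ : ωScottContinuous Φ) {x : P} (hx_map : x ≤ Φ x) (hx_lfp : x ≤ lfpOf Φ) :
    ⨆ n : ℕ, Φ^[n] x = lfpOf Φ := by
  let Ψ : P →𝒄 P := .ofFun Φ hΦ
  apply le_antisymm
  · exact le_sInf fun y hy =>
      ωSup_iterate_le_prefixedPoint Ψ x hx_map hy (hx_lfp.trans (sInf_le hy))
  · exact sInf_le (ωSup_iterate_mem_fixedPoint Ψ x hx_map).le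

theorem iSup_iterate_eq_lfpOf_of_continuous {P : Type*} [CompleteLattice P] [TopologicalSpace P]
    [SupConvergenceClass P] [T2Space P] {Φ : P → P} (hmono : Monotone Φ) (hcont : Continuous Φ)
    {x : P} (hx_map : x ≤ Φ x) (hx_lfp : x ≤ lfpOf Φ) : ⨆ n : ℕ, Φ^[n] x = lfpOf Φ :=
  iSup_iterate_eq_lfpOf (ωScottContinuous_of_monotone_of_continuous hmono hcont) hx_map hx_lfp

end Kleene

namespace SSG

variable (G : SSG S A)

lemma sumR_le_sumR {f g : S → unitInterval} (hfg : f ≤ g) {s : S} {a : A} (ha : a ∈ G.Av s) :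
    G.sumR f s a ≤ G.sumR g s a :=
  Finset.sum_le_sum fun s' _ => mul_le_mul_of_nonneg_left (hfg s') (G.tr_nonneg s a ha s')

lemma continuous_sumR (s : S) (a : A) : Continuous fun f => G.sumR f s a := by
  unfold sumR
  fun_prop

lemma monotone_bellman : Monotone G.bellman := by
  intro f g hfg s
  unfold bellman
  split_ifs
  · exact le_rfl
  · exact Finset.sup'_mono_fun fun a _ => G.sumR_le_sumR hfg a.2
  · exact Finset.inf'_mono_fun fun a _ => G.sumR_le_sumR hfg a.2

lemma continuous_bellman : Continuous G.bellman := by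
  refine continuous_pi fun s => ?_
  unfold bellman
  split_ifs
  · exact continuous_const
  · exact Continuous.finset_sup'_apply _ fun a _ => (G.continuous_sumR s a.1).subtype_mk _
  · exact Continuous.finset_inf'_apply _ fun a _ => (G.continuous_sumR s a.1).subtype_mk _

lemma L0_le_bellman (f : S → unitInterval) : G.L0 ≤ G.bellman f := by
  intro s
  unfold L0 bellman
  split_ifs
  · exact le_rfl
  all_goals exact unitInterval.nonneg'

lemma L0_le_lfpOf_bellman : G.L0 ≤ lfpOf G.bellman :=
  le_sInf fun f hf => (G.L0_le_bellman f).trans hf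

end SSG

/-- Value iteration converges from below to the value `V = lfp(B)`. -/
theorem SSG.vi_converges (G : SSG S A) :
    (⨆ n : ℕ, G.bellman^[n] G.L0) = lfpOf G.bellman :=
  iSup_iterate_eq_lfpOf_of_continuous G.monotone_bellman G.continuous_bellman
    (G.L0_le_bellman G.L0) G.L0_le_lfpOf_bellman
end
end

section
/- Sink states have value zero: if Z ⊆ S satisfies Z ∩ F = ∅ and for every s ∈ Z and every a ∈ Av(s) one has Post(s,a) ⊆ Z (where Post(s,a) := {s' ∈ S : δ(s,a,s') > 0}), then V(s) = 0 for every s ∈ Z, where V = lfp(B). -/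
noncomputable section
open Classical Finset

variable {S A : Type} [Fintype S] [Nonempty S] [Fintype A]

/-! The indicator function of the complement of `Z` is a pre-fixpoint of the Bellman operator: from
a state of `Z` an action that cannot leave `Z` has expected value `0`. The least fixpoint is the
infimum of the pre-fixpoints, so it lies below this indicator and vanishes on `Z`. At a Minimizer
state the minimum is already `0` once a single action stays in `Z`, so it is enough that Maximizer
cannot force the play out of `Z`. -/

lemma lfpOf_le {P : Type*} [CompleteLattice P] {Φ : P → P} {x : P} (hx : Φ x ≤ x) :
    lfpOf Φ ≤ x :=
  sInf_le hx

namespace SSG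

variable {G : SSG S A} {f : S → unitInterval} {Z : Set S} {s : S} {a : A}

lemma sumR_eq_zero_iff (ha : a ∈ G.Av s) :
    G.sumR f s a = 0 ↔ ∀ s', 0 < G.tr s a s' → f s' = 0 := by
  have term_nonneg : ∀ s' ∈ univ, 0 ≤ G.tr s a s' * (f s' : ℝ) := fun s' _ =>
    mul_nonneg (G.tr_nonneg s a ha s') (f s').2.1
  simp only [sumR, sum_eq_zero_iff_of_nonneg term_nonneg, mem_univ, true_imp_iff, mul_eq_zero,
    Set.Icc.coe_eq_zero, (G.tr_nonneg s a ha _).lt_iff_ne', ne_eq, or_iff_not_imp_left]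

lemma bellman_le_iff_of_isMax (hsF : s ∉ G.F) (hs : G.isMax s) {c : unitInterval} :
    G.bellman f s ≤ c ↔ ∀ a ∈ G.Av s, G.sumR f s a ≤ c := by
  simp only [bellman, if_neg hsF, if_pos hs, sup'_le_iff, mem_attach, true_imp_iff,
    Subtype.forall, ← Subtype.coe_le_coe]

lemma bellman_le_iff_of_not_isMax (hsF : s ∉ G.F) (hs : ¬G.isMax s) {c : unitInterval} :
    G.bellman f s ≤ c ↔ ∃ a ∈ G.Av s, G.sumR f s a ≤ c := by
  simp only [bellman, if_neg hsF, if_neg hs, inf'_le_iff, mem_attach, true_and,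
    Subtype.exists, ← Subtype.coe_le_coe, exists_prop]

/-- A trap for Maximizer: a set of states that the play cannot leave against the will of Minimizer.
Every action of Maximizer stays in `Z` almost surely, and Minimizer has an action that does; the
successor set `Post(s,a)` is written out as `{s' | 0 < G.tr s a s'}`. -/
structure IsMaxTrap (G : SSG S A) (Z : Set S) : Prop where
  post_subset : ∀ s ∈ Z, G.isMax s → ∀ a ∈ G.Av s, {s' | 0 < G.tr s a s'} ⊆ Z
  exists_post_subset : ∀ s ∈ Z, ¬G.isMax s → ∃ a ∈ G.Av s, {s' | 0 < G.tr s a s'} ⊆ Z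

lemma sumR_indicator_compl_eq_zero (ha : a ∈ G.Av s) (hpost : {s' | 0 < G.tr s a s'} ⊆ Z) :
    G.sumR (Zᶜ.indicator 1) s a = 0 :=
  (sumR_eq_zero_iff ha).2 fun _ hs' =>
    Set.indicator_of_notMem (Set.notMem_compl_iff.2 (hpost hs')) 1

lemma IsMaxTrap.bellman_indicator_compl_le (hZ : G.IsMaxTrap Z) (hZF : Disjoint Z G.F) :
    G.bellman (Zᶜ.indicator 1) ≤ Zᶜ.indicator 1 := by
  intro s
  by_cases hs : s ∈ Z
  · have hsF : s ∉ G.F := hZF.notMem_of_mem_left hs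
    rw [Set.indicator_of_notMem (Set.notMem_compl_iff.2 hs)]
    by_cases hmax : G.isMax s
    · exact (bellman_le_iff_of_isMax hsF hmax).2 fun a ha =>
        (sumR_indicator_compl_eq_zero ha (hZ.post_subset s hs hmax a ha)).le
    · obtain ⟨a, ha, hpost⟩ := hZ.exists_post_subset s hs hmax
      exact (bellman_le_iff_of_not_isMax hsF hmax).2
        ⟨a, ha, (sumR_indicator_compl_eq_zero ha hpost).le⟩
  · rw [Set.indicator_of_mem (Set.mem_compl hs)]
    exact unitInterval.le_one'

theorem sink_value_zero_general (hZ : G.IsMaxTrap Z) (hZF : Disjoint Z G.F) (hs : s ∈ Z) :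
    lfpOf G.bellman s = 0 := by
  refine le_antisymm ?_ unitInterval.nonneg'
  calc lfpOf G.bellman s ≤ Zᶜ.indicator 1 s := lfpOf_le (hZ.bellman_indicator_compl_le hZF) s
    _ = 0 := Set.indicator_of_notMem (Set.notMem_compl_iff.2 hs) 1

lemma isMaxTrap_of_post_subset (hclosed : ∀ s ∈ Z, ∀ a ∈ G.Av s, {s' | 0 < G.tr s a s'} ⊆ Z) :
    G.IsMaxTrap Z where
  post_subset s hs _ := hclosed s hs
  exists_post_subset s hs _ := (G.avNonempty s).imp fun a ha => ⟨ha, hclosed s hs a ha⟩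

end SSG

/-- Sink states have value zero: if `Z` is disjoint from the goal states and closed
under all available actions (every `Post(s,a) ⊆ Z`), then the value `V = lfp(B)`
is `0` on `Z`. -/
theorem SSG.sink_value_zero (G : SSG S A) (Z : Set S) (hZF : Z ∩ G.F = ∅)
    (hclosed : ∀ s ∈ Z, ∀ a ∈ G.Av s, {s' | 0 < G.tr s a s'} ⊆ Z) :
    ∀ s ∈ Z, lfpOf G.bellman s = 0 :=
  fun _ hs => sink_value_zero_general (isMaxTrap_of_post_subset hclosed)
    (Set.disjoint_iff_inter_eq_empty.2 hZF) hs
end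
end

section
/- Soundness of deflating on simple end components: suppose T ⊆ S satisfies the SEC condition V(s) = bexit_V(T) for all s ∈ T, where V = lfp(B). Then deflate_T(V) = V, and for every value function f with V ≤ f pointwise one has V ≤ deflate_T(f) pointwise. -/
/-!
The operator `deflate_T` sends `f` to the largest value function below `f` that is bounded on `T`
by `bexit_f(T)`. It is monotone, because `bexit` is, and it fixes exactly those `f` that are already
bounded on `T` by their own best exit. The SEC condition makes `V` such a fixed point, so `V ≤ f`
yields `V = deflate_T(V) ≤ deflate_T(f)`.
-/

noncomputable section
open Classical Finset

variable {S A : Type} [Fintype S] [Nonempty S] [Fintype A]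

/-- Exiting state-action pairs of `T`: a Maximizer state `s ∈ T` together with an
available action `a` whose set of successors `Post(s,a) = {s' | δ(s,a,s') > 0}`
is not contained in `T`. -/
noncomputable def SSG.exits (G : SSG S A) (T : Set S) : Finset (S × A) :=
  Finset.univ.filter (fun p =>
    p.1 ∈ T ∧ G.isMax p.1 ∧ p.2 ∈ G.Av p.1 ∧ ¬ ({s' | 0 < G.tr p.1 p.2 s'} ⊆ T))

lemma SSG.exits_av (G : SSG S A) {T : Set S} {p : S × A} (hp : p ∈ G.exits T) :
    p.2 ∈ G.Av p.1 :=
  (Finset.mem_filter.mp hp).2.2.2.1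

/-- The best exit from `T` according to `f`: the maximum of `Σ_{s'} δ(s,a,s')·f(s')`
over all exiting state-action pairs of `T`, with the maximum over the empty set
defined to be `0`. -/
noncomputable def SSG.bexit (G : SSG S A) (T : Set S) (f : S → unitInterval) : unitInterval :=
  (G.exits T).attach.fold (· ⊔ ·) 0
    (fun p => (⟨G.sumR f p.1.1 p.1.2, G.sumR_mem f (G.exits_av p.2)⟩ : unitInterval))

/-- The deflate operator: on `T` it caps the estimate by the best exit of `T`,
outside of `T` it leaves the estimate unchanged. -/
noncomputable def SSG.deflate (G : SSG S A) (T : Set S) (f : S → unitInterval) :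
    S → unitInterval :=
  fun s => if s ∈ T then min (f s) (G.bexit T f) else f s

namespace SSG

variable (G : SSG S A) (T : Set S)

lemma sumR_mono {s : S} {a : A} (ha : a ∈ G.Av s) : Monotone fun f => G.sumR f s a :=
  fun _ _ hfg => Finset.sum_le_sum fun s' _ =>
    mul_le_mul_of_nonneg_left (hfg s') (G.tr_nonneg s a ha s')

lemma bexit_eq_sup (f : S → unitInterval) :
    G.bexit T f = (G.exits T).attach.sup fun p =>
      ⟨G.sumR f p.1.1 p.1.2, G.sumR_mem f (G.exits_av p.2)⟩ :=
  rfl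

lemma bexit_mono : Monotone (G.bexit T) := by
  intro f g hfg
  simp only [bexit_eq_sup]
  exact Finset.sup_mono_fun fun p _ => G.sumR_mono (G.exits_av p.2) hfg

variable {G T} in
lemma le_deflate_iff {f g : S → unitInterval} :
    g ≤ G.deflate T f ↔ g ≤ f ∧ ∀ s ∈ T, g s ≤ G.bexit T f := by
  simp only [Pi.le_def, ← forall_and]
  refine forall_congr' fun s => ?_
  by_cases hs : s ∈ T <;> simp [deflate, hs]

lemma deflate_le (f : S → unitInterval) : G.deflate T f ≤ f :=
  (le_deflate_iff.mp le_rfl).1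

lemma deflate_le_bexit (f : S → unitInterval) {s : S} (hs : s ∈ T) :
    G.deflate T f s ≤ G.bexit T f :=
  (le_deflate_iff.mp le_rfl).2 s hs

lemma deflate_mono : Monotone (G.deflate T) := fun f _ hfg =>
  le_deflate_iff.mpr ⟨(G.deflate_le T f).trans hfg, fun _ hs =>
    (G.deflate_le_bexit T f hs).trans (G.bexit_mono T hfg)⟩

variable {G T} in
lemma deflate_eq_self_iff {f : S → unitInterval} :
    G.deflate T f = f ↔ ∀ s ∈ T, f s ≤ G.bexit T f := by
  rw [← (G.deflate_le T f).ge_iff_eq, le_deflate_iff, and_iff_right le_rfl]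

variable {G T} in
theorem deflate_sound_general {V : S → unitInterval} (hV : ∀ s ∈ T, V s ≤ G.bexit T V) :
    G.deflate T V = V ∧ ∀ f : S → unitInterval, V ≤ f → V ≤ G.deflate T f := by
  have hfix : G.deflate T V = V := deflate_eq_self_iff.mpr hV
  exact ⟨hfix, fun f hf => hfix.ge.trans (G.deflate_mono T hf)⟩

end SSG

/-- Soundness of deflating on simple end components: if all states of `T` have
value equal to the best exit of `T` (SEC condition), then deflating fixes the
value `V = lfp(B)` and never decreases an over-approximation of `V` below `V`. -/
theorem SSG.deflate_sound (G : SSG S A) (T : Set S)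
    (hSEC : ∀ s ∈ T, lfpOf G.bellman s = G.bexit T (lfpOf G.bellman)) :
    G.deflate T (lfpOf G.bellman) = lfpOf G.bellman ∧
      ∀ f : S → unitInterval, lfpOf G.bellman ≤ f → lfpOf G.bellman ≤ G.deflate T f :=
  deflate_sound_general fun s hs => (hSEC s hs).le
end
end

section
/- Let (P, ≤) be a complete lattice, B : P → P a monotone map, and d : P → P a monotone map such that d(x) ≤ x for all x ∈ P and d(x) = x for all x with x ≤ lfp(B). Then lfp(d ∘ B) = lfp(B), where lfp denotes the least fixpoint guaranteed by the Knaster–Tarski theorem. -/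
section

variable {P : Type*} [CompleteLattice P]

theorem lfpOf_coe_eq_lfp (f : P →o P) : lfpOf f = f.lfp := rfl

theorem lfp_eq_lfp_of_eqOn_Iic {f g : P →o P} (hfg : Set.EqOn f g (Set.Iic g.lfp)) :
    f.lfp = g.lfp := by
  have hle : f.lfp ≤ g.lfp := f.lfp_le_fixed ((hfg le_rfl).trans g.map_lfp)
  have hfix : g f.lfp = f.lfp := (hfg hle).symm.trans f.map_lfp
  exact hle.antisymm (g.lfp_le_fixed hfix)

theorem lfp_comp_eq_of_eqOn_id {f d : P →o P} (hd : Set.EqOn d id (Set.Iic f.lfp)) :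
    (d.comp f).lfp = f.lfp :=
  -- `f` maps `Set.Iic f.lfp` into itself, so `d.comp f` and `f` agree there.
  lfp_eq_lfp_of_eqOn_Iic fun _ hx => hd (f.map_le_lfp hx)

theorem lfp_deflated_eq_general {B d : P → P} (hB : Monotone B) (hd : Monotone d)
    (hdfix : ∀ x, x ≤ lfpOf B → d x = x) :
    lfpOf (d ∘ B) = lfpOf B := by
  lift B to P →o P using hB
  lift d to P →o P using hd
  rw [lfpOf_coe_eq_lfp] at hdfix ⊢
  exact lfp_comp_eq_of_eqOn_id hdfix

end

/-- If `d` is a monotone deflating operator (`d x ≤ x` everywhere) that fixes every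
point below `lfp(B)`, then `lfp(d ∘ B) = lfp(B)`. -/
theorem lfp_deflated_eq {P : Type*} [CompleteLattice P] (B d : P → P)
    (hB : Monotone B) (hd : Monotone d) (hdle : ∀ x, d x ≤ x)
    (hdfix : ∀ x, x ≤ lfpOf B → d x = x) :
    lfpOf (d ∘ B) = lfpOf B :=
  lfp_deflated_eq_general hB hd hdfix
end

section
/- Park-induction correctness of the deflated operator: let (P, ≤) be a complete lattice, B : P → P monotone, and d : P → P monotone with d(x) ≤ x for all x ∈ P and d(x) = x for all x ≤ lfp(B). Then for every U ∈ P, if d(B(U)) ≤ U then lfp(B) ≤ U. -/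
/-!
The meet `U ⊓ lfp B` is a prefixpoint of `B`: its image lies below `lfp B` because `B` is monotone,
and below `U` because `d` loses nothing of `B U` that lies below `lfp B`. Leastness of `lfp B`
then gives `lfp B ≤ U ⊓ lfp B`.
-/

theorem isLeast_lfpOf {P : Type*} [CompleteLattice P] {B : P → P} (hB : Monotone B) :
    IsLeast {x | B x ≤ x} (lfpOf B) :=
  OrderHom.isLeast_lfp_le ⟨B, hB⟩

section SemilatticeInf

variable {P : Type*} [SemilatticeInf P] {B d : P → P} {L U : P}

theorem map_inf_le_map_inf_of_map_le (hB : Monotone B) (hL : B L ≤ L) : B (U ⊓ L) ≤ B U ⊓ L :=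
  le_inf (hB inf_le_left) ((hB inf_le_right).trans hL)

theorem le_of_isLeast_prefixpoint_of_map_inf_le (hB : Monotone B) (hL : IsLeast {x | B x ≤ x} L)
    (hU : B U ⊓ L ≤ U) : L ≤ U := by
  have hpre : B (U ⊓ L) ≤ U ⊓ L :=
    (map_inf_le_map_inf_of_map_le hB hL.1).trans (le_inf hU inf_le_right)
  exact (hL.2 hpre).trans inf_le_left

theorem park_induction_deflated_general (hB : Monotone B) (hL : IsLeast {x | B x ≤ x} L)
    (hd : ∀ x, x ⊓ L ≤ d x) (hU : d (B U) ≤ U) : L ≤ U :=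
  le_of_isLeast_prefixpoint_of_map_inf_le hB hL ((hd (B U)).trans hU)

end SemilatticeInf

/-- Park-induction correctness of the deflated operator: if `d` is a monotone
deflating operator that fixes every point below `lfp(B)`, then any `U` with
`d(B(U)) ≤ U` is an upper bound on `lfp(B)`. -/
theorem park_induction_deflated {P : Type*} [CompleteLattice P] (B d : P → P)
    (hB : Monotone B) (hd : Monotone d) (hdle : ∀ x, d x ≤ x)
    (hdfix : ∀ x, x ≤ lfpOf B → d x = x) :
    ∀ U : P, d (B U) ≤ U → lfpOf B ≤ U := fun _ =>
  park_induction_deflated_general hB (isLeast_lfpOf hB) fun _ =>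
    (hdfix _ inf_le_right).ge.trans (hd inf_le_left)
end

section
/- Correctness of optimistic value iteration for SSGs: let V = lfp(B), let d be an operator on value functions that is monotone, satisfies d(f) ≤ f for all f, and satisfies d(f) = f for all f ≤ V, and let ε ≥ 0. If L and U are value functions with L ≤ V pointwise, d(B(U)) ≤ U pointwise, and U(s) ≤ L(s) + ε for all s ∈ S, then for every state s: L(s) ≤ V(s) ≤ U(s) ≤ L(s) + ε; in particular 0 ≤ V(s) − L(s) ≤ ε, so L is an ε-precise under-approximation of the value. -/
/-!
Write `V` for the least fixpoint of the monotone Bellman operator `B`. An operator `d` that is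
monotone and fixes everything below `V` never cuts below `V`: `f ⊓ V ≤ d f`. Hence
`B U ⊓ V ≤ d (B U) ≤ U`, and since `B (U ⊓ V) ≤ B U ⊓ B V = B U ⊓ V`, the meet `U ⊓ V` is a
pre-fixpoint of `B`. By leastness `V ≤ U ⊓ V ≤ U`.
-/

noncomputable section
open Classical Finset

variable {S A : Type} [Fintype S] [Nonempty S] [Fintype A]

lemma inf_le_map_of_forall_le_map {P : Type*} [SemilatticeInf P] {d : P → P} {v : P}
    (hd : Monotone d) (hdv : ∀ y ≤ v, y ≤ d y) (x : P) : x ⊓ v ≤ d x :=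
  (hdv _ inf_le_right).trans (hd inf_le_left)

lemma lfp_le_of_map_inf_lfp_le {P : Type*} [CompleteLattice P] (Φ : P →o P) {u : P}
    (hu : Φ u ⊓ Φ.lfp ≤ u) : Φ.lfp ≤ u := by
  have map_meet_le : Φ (u ⊓ Φ.lfp) ≤ Φ u ⊓ Φ.lfp :=
    calc Φ (u ⊓ Φ.lfp) ≤ Φ u ⊓ Φ Φ.lfp := Φ.monotone.map_inf_le u Φ.lfp
      _ = Φ u ⊓ Φ.lfp := by rw [Φ.map_lfp]
  have meet_prefixed : Φ (u ⊓ Φ.lfp) ≤ u ⊓ Φ.lfp :=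
    map_meet_le.trans (le_inf hu inf_le_right)
  exact (Φ.lfp_le meet_prefixed).trans inf_le_left

lemma lfpOf_eq_lfp {P : Type*} [CompleteLattice P] {Φ : P → P} (hΦ : Monotone Φ) :
    lfpOf Φ = OrderHom.lfp ⟨Φ, hΦ⟩ :=
  rfl

lemma SSG.sumR_le_sumR_s12 (G : SSG S A) {f g : S → unitInterval} (hfg : f ≤ g) {s : S} {a : A}
    (ha : a ∈ G.Av s) : G.sumR f s a ≤ G.sumR g s a :=
  Finset.sum_le_sum fun s' _ => mul_le_mul_of_nonneg_left (hfg s') (G.tr_nonneg s a ha s')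

lemma SSG.monotone_bellman_s12 (G : SSG S A) : Monotone G.bellman := by
  intro f g hfg s
  unfold SSG.bellman
  split_ifs
  · exact le_rfl
  · exact Finset.sup'_mono_fun fun a _ => G.sumR_le_sumR_s12 hfg a.2
  · exact Finset.inf'_mono_fun fun a _ => G.sumR_le_sumR_s12 hfg a.2

lemma SSG.lfpOf_bellman_le_of_bellman_inf_le (G : SSG S A) {U : S → unitInterval}
    (hU : G.bellman U ⊓ lfpOf G.bellman ≤ U) : lfpOf G.bellman ≤ U := by
  rw [lfpOf_eq_lfp G.monotone_bellman_s12] at hU ⊢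
  exact lfp_le_of_map_inf_lfp_le _ hU

theorem SSG.ovi_correct_general (G : SSG S A)
    (d : (S → unitInterval) → (S → unitInterval)) (hd : ∀ f, f ⊓ lfpOf G.bellman ≤ d f)
    (ε : ℝ) (L U : S → unitInterval)
    (hL : L ≤ lfpOf G.bellman) (hU : d (G.bellman U) ≤ U)
    (hclose : ∀ s, (U s : ℝ) ≤ (L s : ℝ) + ε) :
    ∀ s, (L s : ℝ) ≤ (lfpOf G.bellman s : ℝ) ∧
      (lfpOf G.bellman s : ℝ) ≤ (U s : ℝ) ∧ (U s : ℝ) ≤ (L s : ℝ) + ε ∧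
      0 ≤ (lfpOf G.bellman s : ℝ) - (L s : ℝ) ∧
      (lfpOf G.bellman s : ℝ) - (L s : ℝ) ≤ ε := by
  intro s
  have lower : (L s : ℝ) ≤ lfpOf G.bellman s := hL s
  have upper : (lfpOf G.bellman s : ℝ) ≤ U s :=
    G.lfpOf_bellman_le_of_bellman_inf_le ((hd (G.bellman U)).trans hU) s
  exact ⟨lower, upper, hclose s, sub_nonneg.mpr lower, by linarith [hclose s]⟩

/-- Correctness of optimistic value iteration: if `L ≤ V`, `d(B(U)) ≤ U` and
`U ≤ L + ε` pointwise (for a monotone deflating operator `d` fixing everything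
below `V = lfp(B)`), then `L ≤ V ≤ U ≤ L + ε` pointwise; in particular
`0 ≤ V − L ≤ ε`, i.e. `L` is an ε-precise under-approximation of the value. -/
theorem SSG.ovi_correct (G : SSG S A)
    (d : (S → unitInterval) → (S → unitInterval)) (hd : Monotone d)
    (hdle : ∀ f, d f ≤ f) (hdfix : ∀ f, f ≤ lfpOf G.bellman → d f = f)
    (ε : ℝ) (hε : 0 ≤ ε) (L U : S → unitInterval)
    (hL : L ≤ lfpOf G.bellman) (hU : d (G.bellman U) ≤ U)
    (hclose : ∀ s, (U s : ℝ) ≤ (L s : ℝ) + ε) :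
    ∀ s, (L s : ℝ) ≤ (lfpOf G.bellman s : ℝ) ∧
      (lfpOf G.bellman s : ℝ) ≤ (U s : ℝ) ∧ (U s : ℝ) ≤ (L s : ℝ) + ε ∧
      0 ≤ (lfpOf G.bellman s : ℝ) - (L s : ℝ) ∧
      (lfpOf G.bellman s : ℝ) - (L s : ℝ) ≤ ε :=
  G.ovi_correct_general d (inf_le_map_of_forall_le_map hd fun f hf => (hdfix f hf).ge)
    ε L U hL hU hclose
end
end

section
/- Sandwich argument for the correctness of precise topological value iteration: let σ be a Maximizer strategy and τ a Minimizer strategy such that lfp(B_σ) = lfp(B_{σ,τ}) and lfp(B_τ) = lfp(B_{σ,τ}) (i.e., σ is optimal against τ and τ is optimal against σ). Then lfp(B) = lfp(B_{σ,τ}); that is, the value of the game equals the value of the Markov chain induced by the pair of strategies (σ, τ). -/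
noncomputable section
open Classical Finset

variable {S A : Type} [Fintype S] [Nonempty S] [Fintype A]

/-- The Bellman operator with a fixed Maximizer strategy `σ`. -/
noncomputable def SSG.bellmanMax (G : SSG S A) (σ : S → A)
    (hσ : ∀ s, G.isMax s → σ s ∈ G.Av s) (f : S → unitInterval) : S → unitInterval :=
  fun s =>
    if s ∈ G.F then 1
    else if hM : G.isMax s then ⟨G.sumR f s (σ s), G.sumR_mem f (hσ s hM)⟩
    else
      (G.Av s).attach.inf' (Finset.attach_nonempty_iff.mpr (G.avNonempty s))
        (fun a => (⟨G.sumR f s a.1, G.sumR_mem f a.2⟩ : unitInterval))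

/-- The Bellman operator with a fixed Minimizer strategy `τ`. -/
noncomputable def SSG.bellmanMin (G : SSG S A) (τ : S → A)
    (hτ : ∀ s, ¬ G.isMax s → τ s ∈ G.Av s) (f : S → unitInterval) : S → unitInterval :=
  fun s =>
    if s ∈ G.F then 1
    else if hM : G.isMax s then
      (G.Av s).attach.sup' (Finset.attach_nonempty_iff.mpr (G.avNonempty s))
        (fun a => (⟨G.sumR f s a.1, G.sumR_mem f a.2⟩ : unitInterval))
    else ⟨G.sumR f s (τ s), G.sumR_mem f (hτ s hM)⟩

/-- The Bellman operator of the Markov chain induced by fixing both strategies. -/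
noncomputable def SSG.bellmanBoth (G : SSG S A) (σ τ : S → A)
    (hσ : ∀ s, G.isMax s → σ s ∈ G.Av s) (hτ : ∀ s, ¬ G.isMax s → τ s ∈ G.Av s)
    (f : S → unitInterval) : S → unitInterval :=
  fun s =>
    if s ∈ G.F then 1
    else if hM : G.isMax s then ⟨G.sumR f s (σ s), G.sumR_mem f (hσ s hM)⟩
    else ⟨G.sumR f s (τ s), G.sumR_mem f (hτ s hM)⟩

/-!
Fixing an action can only lower a maximum and only raise a minimum, so `B_σ ≤ B ≤ B_τ` pointwise.
A larger operator has fewer pre-fixpoints, so `lfp B_σ ≤ lfp B ≤ lfp B_τ`, and by hypothesis both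
ends are `lfp B_{σ,τ}`.
-/

lemma lfpOf_mono {P : Type*} [CompleteLattice P] : Monotone (lfpOf : (P → P) → P) :=
  fun _ _ hle => sInf_le_sInf fun x hx => (hle x).trans hx

lemma SSG.bellmanMax_le_bellman (G : SSG S A) (σ : S → A)
    (hσ : ∀ s, G.isMax s → σ s ∈ G.Av s) : G.bellmanMax σ hσ ≤ G.bellman := by
  intro f s
  unfold SSG.bellmanMax SSG.bellman
  split_ifs with hF hM
  · exact le_rfl
  · exact le_sup'_of_le _ (mem_attach _ ⟨σ s, hσ s hM⟩) le_rfl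
  · exact le_rfl

lemma SSG.bellman_le_bellmanMin (G : SSG S A) (τ : S → A)
    (hτ : ∀ s, ¬ G.isMax s → τ s ∈ G.Av s) : G.bellman ≤ G.bellmanMin τ hτ := by
  intro f s
  unfold SSG.bellman SSG.bellmanMin
  split_ifs with hF hM
  · exact le_rfl
  · exact le_rfl
  · exact inf'_le_of_le _ (mem_attach _ ⟨τ s, hτ s hM⟩) le_rfl

/-- Sandwich argument: if `σ` is optimal against `τ` and `τ` is optimal against
`σ`, i.e. `lfp(B_σ) = lfp(B_{σ,τ}) = lfp(B_τ)`, then the value of the game equals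
the value of the induced Markov chain: `lfp(B) = lfp(B_{σ,τ})`. -/
theorem SSG.sandwich (G : SSG S A) (σ τ : S → A)
    (hσ : ∀ s, G.isMax s → σ s ∈ G.Av s) (hτ : ∀ s, ¬ G.isMax s → τ s ∈ G.Av s)
    (hσopt : lfpOf (G.bellmanMax σ hσ) = lfpOf (G.bellmanBoth σ τ hσ hτ))
    (hτopt : lfpOf (G.bellmanMin τ hτ) = lfpOf (G.bellmanBoth σ τ hσ hτ)) :
    lfpOf G.bellman = lfpOf (G.bellmanBoth σ τ hσ hτ) := by
  apply le_antisymm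
  · calc lfpOf G.bellman
        ≤ lfpOf (G.bellmanMin τ hτ) := lfpOf_mono (G.bellman_le_bellmanMin τ hτ)
      _ = lfpOf (G.bellmanBoth σ τ hσ hτ) := hτopt
  · calc lfpOf (G.bellmanBoth σ τ hσ hτ)
        = lfpOf (G.bellmanMax σ hσ) := hσopt.symm
      _ ≤ lfpOf G.bellman := lfpOf_mono (G.bellmanMax_le_bellman σ hσ)
end
end

section
/- Invertibility of the substochastic matrix used to solve the induced Markov chain: let n ∈ ℕ and let Q be an n × n real matrix with Q_{ij} ≥ 0 for all i, j and Σ_j Q_{ij} ≤ 1 for every row i (a substochastic matrix). Suppose that for every index i there exists m ∈ ℕ with Σ_j (Q^m)_{ij} < 1 (some probability mass escapes from every state). Then the matrix I − Q is invertible. -/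
open Finset

/-!
It suffices that a fixed vector `v` of `Q` vanishes. Such a `v` is fixed by every power of `Q`, so
the rows of different powers can be mixed: if row `i` of `A` is row `i` of `Q ^ m i`, where `m i` is
an exponent at which mass has escaped from `i`, then still `A v = v`. Every row of `A` has absolute
sum less than `1`, so `A` strictly contracts the sup norm and `v = 0`.
-/

section LinftyOpNorm

open scoped Matrix Matrix.Norms.Operator

variable {ι κ R : Type*} [Fintype ι] [Fintype κ]

theorem matrix_linfty_opNorm_lt_iff [SeminormedAddCommGroup R] {A : Matrix ι κ R} {r : ℝ}
    (hr : 0 < r) : ‖A‖ < r ↔ ∀ i, ∑ j, ‖A i j‖ < r := by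
  lift r to NNReal using hr.le
  rw [Matrix.linfty_opNorm_def, NNReal.coe_lt_coe, Finset.sup_lt_iff (NNReal.coe_pos.mp hr)]
  simp only [mem_univ, true_imp_iff, ← NNReal.coe_lt_coe, NNReal.coe_sum, coe_nnnorm]

theorem eq_zero_of_mulVec_eq_self_of_sum_norm_lt_one [NonUnitalNormedRing R] {A : Matrix ι ι R}
    {v : ι → R} (hA : ∀ i, ∑ j, ‖A i j‖ < 1) (hv : A *ᵥ v = v) : v = 0 := by
  have hnorm : ‖A‖ < 1 := (matrix_linfty_opNorm_lt_iff one_pos).mpr hA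
  have hle : ‖v‖ ≤ ‖A‖ * ‖v‖ := by
    simpa only [hv] using Matrix.linfty_opNorm_mulVec A v
  by_contra hv0
  exact hle.not_gt (mul_lt_of_lt_one_left (norm_pos_iff.mpr hv0) hnorm)

end LinftyOpNorm

section FixedVectors

open scoped Matrix

variable {ι R : Type*} [Fintype ι] [DecidableEq ι]

theorem pow_mulVec_eq_self [Semiring R] {Q : Matrix ι ι R} {v : ι → R} (hv : Q *ᵥ v = v) (m : ℕ) :
    (Q ^ m) *ᵥ v = v := by
  induction m with
  | zero => rw [pow_zero, Matrix.one_mulVec]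
  | succ m ih => rw [pow_succ, ← Matrix.mulVec_mulVec, hv, ih]

theorem eq_zero_of_mulVec_eq_self_of_sum_norm_pow_lt_one [NormedRing R] {Q : Matrix ι ι R}
    {v : ι → R} (hQ : ∀ i, ∃ m : ℕ, ∑ j, ‖(Q ^ m) i j‖ < 1) (hv : Q *ᵥ v = v) : v = 0 := by
  choose m hm using hQ
  let A : Matrix ι ι R := Matrix.of fun i => (Q ^ m i) i
  have hfix : A *ᵥ v = v := funext fun i => congrFun (pow_mulVec_eq_self hv (m i)) i
  exact eq_zero_of_mulVec_eq_self_of_sum_norm_lt_one (A := A) hm hfix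

theorem isUnit_one_sub_of_forall_mulVec_eq_self [Field R] {Q : Matrix ι ι R}
    (hQ : ∀ v : ι → R, Q *ᵥ v = v → v = 0) : IsUnit (1 - Q) := by
  rw [← Matrix.mulVec_injective_iff_isUnit, ← Matrix.coe_mulVecLin, injective_iff_map_eq_zero]
  intro v hv
  rw [Matrix.mulVecLin_apply, Matrix.sub_mulVec, Matrix.one_mulVec, sub_eq_zero] at hv
  exact hQ v hv.symm

end FixedVectors

theorem substochastic_invertible_general {ι K : Type*} [Fintype ι] [DecidableEq ι] [NormedField K]
    {Q : Matrix ι ι K} (hescape : ∀ i, ∃ m : ℕ, ∑ j, ‖(Q ^ m) i j‖ < 1) : IsUnit (1 - Q) :=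
  isUnit_one_sub_of_forall_mulVec_eq_self fun _ =>
    eq_zero_of_mulVec_eq_self_of_sum_norm_pow_lt_one hescape

/-- A substochastic matrix from which some probability mass eventually escapes
from every state gives rise to an invertible matrix `I − Q`. -/
theorem substochastic_invertible (n : ℕ) (Q : Matrix (Fin n) (Fin n) ℝ)
    (hnonneg : ∀ i j, 0 ≤ Q i j) (hrow : ∀ i, ∑ j, Q i j ≤ 1)
    (hescape : ∀ i, ∃ m : ℕ, ∑ j, (Q ^ m) i j < 1) :
    IsUnit (1 - Q) := by
  refine substochastic_invertible_general ?_
  simpa only [Real.norm_of_nonneg (Matrix.pow_apply_nonneg hnonneg _ _ _)] using hescape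
end
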